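/- Let F : 𝕋 → ℂ be absolutely continuous and let f = P[F] be its Poisson integral. Then for every z ∈ 𝔻, i z f_z(z) equals the Cauchy-type integral of Ḟ: i z f_z(z) = (1/(2πi)) ∫_𝕋 Ḟ(w)/(w − z) dw = (1/(2π)) ∫₀^{2π} Ḟ(e^{it}) / (1 − z e^{−it}) dt. -/

import Mathlib

open MeasureTheory Complex Metric Set Filter
open scoped Real Topology ENNReal

noncomputable section

/-- The Poisson kernel `P(z) = (1-|z|^2)/|1-z|^2`. -/
def poissonKer (z : ℂ) : ℝ := (1 - ‖z‖ ^ 2) / ‖1 - z‖ ^ 2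

/-- The Poisson integral of a boundary function `F` defined on the unit circle. -/
def poissonInt (F : ℂ → ℂ) (z : ℂ) : ℂ :=
  (1 / (2 * π)) * ∫ t in (0:ℝ)..(2 * π),
    (poissonKer (z * Complex.exp (-(t : ℂ) * Complex.I)) : ℂ) *
      F (Complex.exp ((t : ℂ) * Complex.I))

/-- The Poisson integral of a (2π-periodic) function of the angular variable. -/
def poissonIntR (φ : ℝ → ℂ) (z : ℂ) : ℂ :=
  (1 / (2 * π)) * ∫ t in (0:ℝ)..(2 * π),
    (poissonKer (z * Complex.exp (-(t : ℂ) * Complex.I)) : ℂ) * φ t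

/-- The conjugate Poisson kernel `P̃(z) = Im((1+z)/(1-z))`. -/
def conjPoissonKer (z : ℂ) : ℝ := ((1 + z) / (1 - z)).im

/-- The conjugate Poisson integral of a function of the angular variable. -/
def conjPoissonIntR (φ : ℝ → ℂ) (z : ℂ) : ℂ :=
  (1 / (2 * π)) * ∫ t in (0:ℝ)..(2 * π),
    (conjPoissonKer (z * Complex.exp (-(t : ℂ) * Complex.I)) : ℂ) * φ t

/-- Wirtinger derivative `f_z = (1/2)(∂ₓ - i ∂_y) f`. -/
def wdz (f : ℂ → ℂ) (z : ℂ) : ℂ :=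
  (1 / 2) * (fderiv ℝ f z 1 - Complex.I * fderiv ℝ f z Complex.I)

/-- Wirtinger derivative `f_z̄ = (1/2)(∂ₓ + i ∂_y) f`. -/
def wdzb (f : ℂ → ℂ) (z : ℂ) : ℂ :=
  (1 / 2) * (fderiv ℝ f z 1 + Complex.I * fderiv ℝ f z Complex.I)

/-- The angular derivative `f_θ(z) = i (z f_z(z) - z̄ f_z̄(z))`. -/
def fTheta (f : ℂ → ℂ) (z : ℂ) : ℂ :=
  Complex.I * (z * wdz f z - (starRingEnd ℂ) z * wdzb f z)

/-- The radial derivative multiplied by `r`: `r f_r(z) = z f_z(z) + z̄ f_z̄(z)`. -/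
def rFr (f : ℂ → ℂ) (z : ℂ) : ℂ :=
  z * wdz f z + (starRingEnd ℂ) z * wdzb f z

/-- `F : 𝕋 → ℂ` is absolutely continuous with angular derivative `Ḟ = Fd`,
i.e. `t ↦ F(e^{it})` is an indefinite integral of the (locally integrable,
2π-periodic) function `Fd`. -/
def IsACDeriv (F : ℂ → ℂ) (Fd : ℝ → ℂ) : Prop :=
  (∀ a b : ℝ, IntervalIntegrable Fd MeasureTheory.volume a b) ∧
  Function.Periodic Fd (2 * π) ∧
  ∀ t : ℝ, F (Complex.exp ((t : ℂ) * Complex.I)) = F 1 + ∫ s in (0:ℝ)..t, Fd s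

/-- membership in `L^p(𝕋)`, identifying `𝕋` with `[0, 2π)`. -/
def MemLpT (p : ℝ≥0∞) (φ : ℝ → ℂ) : Prop :=
  MeasureTheory.MemLp φ p (MeasureTheory.volume.restrict (Ioc (0:ℝ) (2 * π)))

/-- The integral mean `M_p(r, g)`. -/
def Mp (p : ℝ) (g : ℂ → ℂ) (r : ℝ) : ℝ :=
  ((1 / (2 * π)) * ∫ θ in (0:ℝ)..(2 * π),
      ‖g ((r : ℂ) * Complex.exp ((θ : ℂ) * Complex.I))‖ ^ p) ^ (1 / p)

/-- The `L^p(𝕋)` norm `((1/2π) ∫ |φ|^p)^{1/p}`. -/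
def lpNormT (p : ℝ) (φ : ℝ → ℂ) : ℝ :=
  ((1 / (2 * π)) * ∫ t in (0:ℝ)..(2 * π), ‖φ t‖ ^ p) ^ (1 / p)

/-- Membership in the analytic Hardy space `H^p(𝔻)` for `p ∈ [1, ∞)`. -/
def MemHp (p : ℝ) (g : ℂ → ℂ) : Prop :=
  DifferentiableOn ℂ g (ball (0:ℂ) 1) ∧ ∃ M : ℝ, ∀ r ∈ Ioo (0:ℝ) 1, Mp p g r ≤ M

/-- Membership in `H^∞(𝔻)`: bounded analytic functions on the unit disk. -/
def MemHinf (g : ℂ → ℂ) : Prop :=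
  DifferentiableOn ℂ g (ball (0:ℂ) 1) ∧ ∃ M : ℝ, ∀ z ∈ ball (0:ℂ) 1, ‖g z‖ ≤ M

/-- Harmonicity on the unit disk: `f` is C² with vanishing Laplacian. -/
def HarmonicOnD (f : ℂ → ℂ) : Prop :=
  ContDiffOn ℝ 2 f (ball (0:ℂ) 1) ∧
  ∀ z ∈ ball (0:ℂ) 1,
    fderiv ℝ (fun w => fderiv ℝ f w 1) z 1
      + fderiv ℝ (fun w => fderiv ℝ f w Complex.I) z Complex.I = 0

/-- Membership in the harmonic Hardy space `h^p(𝔻)` for `p ∈ [1, ∞)`. -/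
def Memhp (p : ℝ) (g : ℂ → ℂ) : Prop :=
  HarmonicOnD g ∧ ∃ M : ℝ, ∀ r ∈ Ioo (0:ℝ) 1, Mp p g r ≤ M

/-- Membership in `h^∞(𝔻)`: bounded harmonic functions on the unit disk. -/
def Memhinf (g : ℂ → ℂ) : Prop :=
  HarmonicOnD g ∧ ∃ M : ℝ, ∀ z ∈ ball (0:ℂ) 1, ‖g z‖ ≤ M

/-- `L` is the value of the principal-value Hilbert transform
`(1/2π) p.v. ∫ φ(t)/tan((θ-t)/2) dt` of (the 2π-periodic) `φ` at `θ`. -/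
def IsPVHilbert (φ : ℝ → ℂ) (θ : ℝ) (L : ℂ) : Prop :=
  Filter.Tendsto
    (fun ε : ℝ => (1 / (2 * π)) *
      ∫ t in Ioo (θ - π) (θ + π) \ Ioo (θ - ε) (θ + ε),
        φ t / (Real.tan ((θ - t) / 2) : ℂ))
    (nhdsWithin 0 (Ioi 0)) (nhds L)

/-!
On the unit circle the Poisson kernel is the real part of the Herglotz–Riesz kernel
`H(z, ζ) = (ζ + z) / (ζ - z)`, so `P[F]` is half the holomorphic function `⨍ H(z, ζ) F(ζ)` plus an
antiholomorphic function. The Wirtinger derivative `∂_z` only sees the holomorphic half, which gives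
`f_z(z) = ⨍ ζ / (ζ - z)² F(ζ)`. Along the circle, `-i z ζ / (ζ - z)²` is the angular derivative of
`ζ / (ζ - z)`, so one integration by parts moves the derivative onto `F`; the boundary terms cancel
by periodicity.
-/

open scoped ComplexConjugate

section AbsolutelyContinuous

variable {a b : ℝ}

theorem absolutelyContinuousOnInterval_of_dist_le {X Y : Type*} [PseudoMetricSpace X]
    [PseudoMetricSpace Y] {f : ℝ → X} {g : ℝ → Y} (hg : AbsolutelyContinuousOnInterval g a b)
    (h : ∀ x ∈ uIcc a b, ∀ y ∈ uIcc a b, dist (f x) (f y) ≤ dist (g x) (g y)) :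
    AbsolutelyContinuousOnInterval f a b := by
  rw [absolutelyContinuousOnInterval_iff] at hg ⊢
  intro ε hε
  obtain ⟨δ, hδ, hgδ⟩ := hg ε hε
  refine ⟨δ, hδ, fun E hE hlen ↦ (Finset.sum_le_sum fun i hi ↦ ?_).trans_lt (hgδ E hE hlen)⟩
  exact h _ (hE.1 i hi).1 _ (hE.1 i hi).2

variable {E : Type*} [NormedAddCommGroup E] [NormedSpace ℝ E]

theorem absolutelyContinuousOnInterval_primitive {f : ℝ → E} {c : ℝ}
    (hf : IntervalIntegrable f volume a b) (hc : c ∈ uIcc a b) :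
    AbsolutelyContinuousOnInterval (fun x ↦ ∫ t in c..x, f t) a b := by
  refine absolutelyContinuousOnInterval_of_dist_le
    (hf.norm.absolutelyContinuousOnInterval_intervalIntegral hc) fun x hx y hy ↦ ?_
  have hint {u v : ℝ} (hu : u ∈ uIcc a b) (hv : v ∈ uIcc a b) : IntervalIntegrable f volume u v :=
    hf.mono_set (uIcc_subset_uIcc hu hv)
  rw [dist_eq_norm, Real.dist_eq,
    intervalIntegral.integral_interval_sub_left (hint hc hx) (hint hc hy),
    intervalIntegral.integral_interval_sub_left (hint hc hx).norm (hint hc hy).norm]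
  exact intervalIntegral.norm_integral_le_abs_integral_norm

variable [CompleteSpace E]

theorem integral_eq_sub_of_absolutelyContinuousOnInterval {f f' : ℝ → E}
    (hf : AbsolutelyContinuousOnInterval f a b)
    (hderiv : ∀ᵐ x, x ∈ uIcc a b → HasDerivAt f (f' x) x)
    (hint : IntervalIntegrable f' volume a b) :
    ∫ x in a..b, f' x = f b - f a := by
  have hderiv_zero : ∀ᵐ x, x ∈ uIcc a b → HasDerivAt (fun x ↦ f x - ∫ t in a..x, f' t) 0 x := by
    filter_upwards [hderiv, hint.ae_hasDerivAt_integral] with x hfx hprim hx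
    simpa only [sub_self] using (hfx hx).fun_sub (hprim hx a left_mem_uIcc)
  obtain ⟨C, hC⟩ :=
    (hf.fun_sub (absolutelyContinuousOnInterval_primitive hint left_mem_uIcc)
      ).const_of_ae_hasDerivAt_zero hderiv_zero
  have hab := (hC b right_mem_uIcc).trans (hC a left_mem_uIcc).symm
  rw [intervalIntegral.integral_same, sub_zero] at hab
  rw [← hab, sub_sub_cancel]

theorem integral_mul_deriv_eq_deriv_mul_of_absolutelyContinuousOnInterval {A : Type*}
    [NormedRing A] [NormMulClass A] [NormedAlgebra ℝ A] [CompleteSpace A] {u v u' v' : ℝ → A}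
    (hu : AbsolutelyContinuousOnInterval u a b) (hv : AbsolutelyContinuousOnInterval v a b)
    (huu' : ∀ᵐ x, x ∈ uIcc a b → HasDerivAt u (u' x) x)
    (hvv' : ∀ᵐ x, x ∈ uIcc a b → HasDerivAt v (v' x) x)
    (hu' : IntervalIntegrable u' volume a b) (hv' : IntervalIntegrable v' volume a b) :
    ∫ x in a..b, u x * v' x = u b * v b - u a * v a - ∫ x in a..b, u' x * v x := by
  have hu'v := hu'.mul_continuousOn hv.continuousOn
  have huv' := hv'.continuousOn_mul hu.continuousOn
  have hprod : ∀ᵐ x, x ∈ uIcc a b →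
      HasDerivAt (fun x ↦ u x * v x) (u' x * v x + u x * v' x) x := by
    filter_upwards [huu', hvv'] with x hux hvx hx using (hux hx).fun_mul (hvx hx)
  have hFTC := integral_eq_sub_of_absolutelyContinuousOnInterval (hu.fun_smul hv) hprod
    (hu'v.add huv')
  rw [intervalIntegral.integral_add hu'v huv'] at hFTC
  exact eq_sub_of_add_eq' hFTC

end AbsolutelyContinuous

section CircleParametrization

theorem exp_ofReal_mul_I_eq_circleMap (t : ℝ) : exp (t * I) = circleMap 0 1 t := by
  rw [circleMap_zero, ofReal_one, one_mul]

theorem exp_neg_ofReal_mul_I_eq_inv_circleMap (t : ℝ) :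
    exp (-t * I) = (circleMap 0 1 t)⁻¹ := by
  rw [neg_mul, exp_neg, exp_ofReal_mul_I_eq_circleMap]

theorem deriv_div_sub_comp_circleMap {R t : ℝ} {z : ℂ} (h : circleMap 0 R t - z ≠ 0) :
    deriv ((fun ζ ↦ ζ / (ζ - z)) ∘ circleMap 0 R) t =
      -(I * z * (circleMap 0 R t / (circleMap 0 R t - z) ^ 2)) := by
  have hcircle := hasDerivAt_circleMap 0 R t
  rw [Function.comp_def, (hcircle.fun_div (hcircle.sub_const z) h).deriv]
  ring

end CircleParametrization

section Wirtinger

variable {f g h : ℂ → ℂ} {g' h' z : ℂ}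

theorem wdz_congr (hfg : f =ᶠ[𝓝 z] g) : wdz f z = wdz g z := by
  rw [wdz, wdz, hfg.fderiv_eq]

theorem wdz_add_conj (hg : HasDerivAt g g' z) (hh : HasDerivAt h h' z) :
    wdz (fun w ↦ g w + conj (h w)) z = g' := by
  have hfderiv : HasFDerivAt (fun w ↦ g w + conj (h w)) _ z :=
    (hg.hasFDerivAt.restrictScalars ℝ).fun_add
      (conjCLE.hasFDerivAt.comp z (hh.hasFDerivAt.restrictScalars ℝ))
  rw [wdz, hfderiv.fderiv]
  simp only [add_apply, ContinuousLinearMap.coe_restrictScalars',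
    ContinuousLinearMap.toSpanSingleton_apply, smul_eq_mul, one_mul, ContinuousLinearMap.comp_apply,
    ContinuousLinearEquiv.coe_coe, ContinuousAlgEquiv.coeCLE_apply, conjCAE_apply, map_mul, conj_I]
  linear_combination (-(g' - conj h') / 2) * I_mul_I

end Wirtinger

section Poisson

variable {F : ℂ → ℂ} {c z : ℂ} {R : ℝ}

theorem poissonKer_mul_inv (z : ℂ) {ζ : ℂ} (hζ : ζ ≠ 0) :
    poissonKer (z * ζ⁻¹) = poissonKernel 0 z ζ := by
  have hsub : 1 - z * ζ⁻¹ = (ζ - z) * ζ⁻¹ := by field_simp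
  have hnorm : ‖ζ‖ ≠ 0 := norm_ne_zero_iff.2 hζ
  rw [poissonKer, poissonKernel_def, hsub, norm_mul, norm_mul, norm_inv, sub_zero, sub_zero]
  field_simp

theorem poissonInt_eq_circleAverage (F : ℂ → ℂ) (z : ℂ) :
    poissonInt F z = Real.circleAverage (poissonKernel 0 z • F) 0 1 := by
  simp only [poissonInt, Real.circleAverage_def, exp_ofReal_mul_I_eq_circleMap,
    exp_neg_ofReal_mul_I_eq_inv_circleMap, poissonKer_mul_inv z (circleMap_ne_center one_ne_zero),
    Pi.smul_apply', real_smul]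
  push_cast
  rw [one_div]

theorem circleIntegrable_conj (hF : CircleIntegrable F c R) :
    CircleIntegrable (fun ζ ↦ conj (F ζ)) c R :=
  ⟨conjCLE.toContinuousLinearMap.integrable_comp hF.1,
    conjCLE.toContinuousLinearMap.integrable_comp hF.2⟩

theorem circleAverage_conj (F : ℂ → ℂ) (c : ℂ) (R : ℝ) :
    Real.circleAverage (fun ζ ↦ conj (F ζ)) c R = conj (Real.circleAverage F c R) := by
  simp only [Real.circleAverage_def, intervalIntegral.intervalIntegral_conj, real_smul, map_mul,
    conj_ofReal]

theorem circleAverage_poissonKernel_smul_eq_add_conj (hF : CircleIntegrable F c R)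
    (hz : z ∈ ball c R) :
    Real.circleAverage (poissonKernel c z • F) c R =
      Real.circleAverage (fun ζ ↦ herglotzRieszKernel c z ζ • F ζ) c R / 2 +
        conj (Real.circleAverage (fun ζ ↦ herglotzRieszKernel c z ζ • conj (F ζ)) c R / 2) := by
  have hcont := continuousOn_herglotzRieszKernel_sphere hz
  have hHF := hF.fun_continuousOn_smul hcont
  have hHconjF := (circleIntegrable_conj hF).fun_continuousOn_smul hcont
  have hsplit : poissonKernel c z • F = fun ζ ↦ (2 : ℂ)⁻¹ • (herglotzRieszKernel c z ζ • F ζ +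
      conj (herglotzRieszKernel c z ζ • conj (F ζ))) := by
    funext ζ
    rw [Pi.smul_apply', poissonKernel_eq_re_herglotzRieszKernel, Function.comp_apply, real_smul,
      Complex.re_eq_add_conj]
    simp only [smul_eq_mul, map_mul, conj_conj]
    ring
  rw [hsplit, Real.circleAverage_fun_smul,
    Real.circleAverage_fun_add hHF (circleIntegrable_conj hHconjF), circleAverage_conj,
    map_div₀, map_ofNat, smul_eq_mul]
  ring

theorem wdz_poissonInt (hF : CircleIntegrable F 0 1) (hz : z ∈ ball 0 1) :
    wdz (poissonInt F) z = Real.circleAverage (fun ζ ↦ ζ / (ζ - z) ^ 2 * F ζ) 0 1 := by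
  have hsplit : poissonInt F =ᶠ[𝓝 z] fun w ↦
      Real.circleAverage (fun ζ ↦ herglotzRieszKernel 0 w ζ • F ζ) 0 1 / 2 +
        conj (Real.circleAverage (fun ζ ↦ herglotzRieszKernel 0 w ζ • conj (F ζ)) 0 1 / 2) := by
    filter_upwards [isOpen_ball.mem_nhds hz] with w hw
    rw [poissonInt_eq_circleAverage, circleAverage_poissonKernel_smul_eq_add_conj hF hw]
  rw [wdz_congr hsplit, wdz_add_conj
    ((hasDerivAt_circleAverage_herglotzRieszKernel_smul hF hz).div_const 2)
    ((hasDerivAt_circleAverage_herglotzRieszKernel_smul (circleIntegrable_conj hF) hz).div_const 2),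
    div_eq_inv_mul, ← smul_eq_mul, ← Real.circleAverage_fun_smul]
  congr! 2 with ζ
  simp only [smul_eq_mul]
  ring

end Poisson

namespace IsACDeriv

variable {F G : ℂ → ℂ} {Fd : ℝ → ℂ}

theorem comp_circleMap_eq (hF : IsACDeriv F Fd) :
    F ∘ circleMap 0 1 = fun t ↦ F 1 + ∫ s in (0 : ℝ)..t, Fd s := by
  funext t
  rw [Function.comp_apply, ← exp_ofReal_mul_I_eq_circleMap, hF.2.2]

theorem ae_hasDerivAt (hF : IsACDeriv F Fd) :
    ∀ᵐ t, HasDerivAt (F ∘ circleMap 0 1) (Fd t) t := by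
  have hloc : LocallyIntegrable Fd := fun t ↦
    ⟨Icc (t - 1) (t + 1), Icc_mem_nhds (by linarith) (by linarith),
      (intervalIntegrable_iff_integrableOn_Icc_of_le (by linarith)).1 (hF.1 _ _)⟩
  filter_upwards [LocallyIntegrable.ae_hasDerivAt_integral hloc] with t ht
  rw [hF.comp_circleMap_eq]
  exact (ht 0).const_add (F 1)

theorem absolutelyContinuousOnInterval (hF : IsACDeriv F Fd) (a b : ℝ) :
    AbsolutelyContinuousOnInterval (F ∘ circleMap 0 1) a b := by
  have hprim := absolutelyContinuousOnInterval_primitive (hF.1 a b) left_mem_uIcc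
  refine absolutelyContinuousOnInterval_of_dist_le hprim fun x _ y _ ↦ le_of_eq ?_
  simp only [hF.comp_circleMap_eq, dist_eq_norm, add_sub_add_left_eq_sub,
    intervalIntegral.integral_interval_sub_left (hF.1 _ _) (hF.1 _ _)]

theorem circleIntegrable (hF : IsACDeriv F Fd) : CircleIntegrable F 0 1 :=
  (hF.absolutelyContinuousOnInterval 0 (2 * π)).continuousOn.intervalIntegrable

theorem integral_mul_deriv_comp_circleMap (hF : IsACDeriv F Fd)
    (hG : AnalyticOnNhd ℂ G (sphere 0 1)) :
    ∫ t in (0 : ℝ)..2 * π, F (circleMap 0 1 t) * deriv (G ∘ circleMap 0 1) t =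
      -∫ t in (0 : ℝ)..2 * π, Fd t * G (circleMap 0 1 t) := by
  have hsmooth : ContDiff ℝ 1 (G ∘ circleMap 0 1) := contDiff_iff_contDiffAt.2 fun t ↦
    ((hG _ (circleMap_mem_sphere 0 zero_le_one t)).contDiffAt.restrict_scalars ℝ).comp t
      (contDiff_circleMap 0 1).contDiffAt
  have hderiv (t : ℝ) : HasDerivAt (G ∘ circleMap 0 1) (deriv (G ∘ circleMap 0 1) t) t :=
    (hsmooth.differentiable one_ne_zero t).hasDerivAt
  have hparts := integral_mul_deriv_eq_deriv_mul_of_absolutelyContinuousOnInterval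
    (hF.absolutelyContinuousOnInterval 0 (2 * π)) hsmooth.contDiffOn.absolutelyContinuousOnInterval
    (hF.ae_hasDerivAt.mono fun t ht _ ↦ ht) (.of_forall fun t _ ↦ hderiv t) (hF.1 _ _)
    ((hsmooth.continuous_deriv le_rfl).intervalIntegrable _ _)
  have hperiod : circleMap 0 1 (2 * π) = circleMap 0 1 0 := by
    rw [← zero_add (2 * π), periodic_circleMap]
  simpa only [Function.comp_apply, hperiod, sub_self, zero_sub] using hparts

theorem I_mul_wdz_poissonInt (hF : IsACDeriv F Fd) {z : ℂ} (hz : z ∈ ball 0 1) :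
    I * z * wdz (poissonInt F) z =
      1 / (2 * π) * ∫ t in (0 : ℝ)..2 * π, Fd t / (1 - z * exp (-t * I)) := by
  have hne {ζ : ℂ} (hζ : ζ ∈ sphere 0 1) : ζ - z ≠ 0 :=
    sub_ne_zero.2 (sphere_disjoint_ball.ne_of_mem hζ hz)
  have hkernel : AnalyticOnNhd ℂ (fun ζ ↦ ζ / (ζ - z)) (sphere 0 1) := fun ζ hζ ↦
    analyticAt_id.div (analyticAt_id.sub analyticAt_const) (hne hζ)
  have hparts := hF.integral_mul_deriv_comp_circleMap hkernel
  have hderiv (t : ℝ) := deriv_div_sub_comp_circleMap (hne (circleMap_mem_sphere 0 zero_le_one t))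
  simp only [hderiv, mul_neg, intervalIntegral.integral_neg, neg_inj] at hparts
  have hcauchy (t : ℝ) : Fd t * (circleMap 0 1 t / (circleMap 0 1 t - z)) =
      Fd t / (1 - z * exp (-t * I)) := by
    have hζ : circleMap 0 1 t ≠ 0 := circleMap_ne_center one_ne_zero
    have hsub : 1 - z * (circleMap 0 1 t)⁻¹ = (circleMap 0 1 t - z) / circleMap 0 1 t := by
      rw [sub_div, div_self hζ, div_eq_mul_inv]
    rw [exp_neg_ofReal_mul_I_eq_inv_circleMap, hsub, div_div_eq_mul_div, mul_div_assoc]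
  simp only [← hcauchy]
  rw [← hparts, wdz_poissonInt hF.circleIntegrable hz, Real.circleAverage_def, real_smul,
    mul_left_comm, ← intervalIntegral.integral_const_mul]
  push_cast
  rw [one_div]
  congr! 3
  ring

end IsACDeriv

theorem cauchyIntegral_eq_integral_div_one_sub (φ : ℝ → ℂ) (z : ℂ) :
    1 / (2 * π * I) * ∫ t in (0 : ℝ)..2 * π, φ t / (exp (t * I) - z) * (I * exp (t * I)) =
      1 / (2 * π) * ∫ t in (0 : ℝ)..2 * π, φ t / (1 - z * exp (-t * I)) := by
  have hintegrand (t : ℝ) : φ t / (exp (t * I) - z) * (I * exp (t * I)) =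
      I * (φ t / (1 - z * exp (-t * I))) := by
    have hsub : exp (t * I) - z = exp (t * I) * (1 - z * exp (-t * I)) := by
      rw [neg_mul, exp_neg]
      field_simp
    rw [hsub]
    field_simp
  simp_rw [hintegrand]
  rw [intervalIntegral.integral_const_mul]
  field_simp

/-- For `F : 𝕋 → ℂ` absolutely continuous and `f = P[F]`, for every
`z ∈ 𝔻`, `i z f_z(z)` equals the Cauchy-type integral of `Ḟ`:
`i z f_z(z) = (1/(2πi)) ∫_𝕋 Ḟ(w)/(w-z) dw = (1/(2π)) ∫₀^{2π} Ḟ(e^{it})/(1 - z e^{-it}) dt`. -/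
theorem stmt7 (F : ℂ → ℂ) (Fd : ℝ → ℂ) (hF : IsACDeriv F Fd) :
    ∀ z ∈ ball (0:ℂ) 1,
      (Complex.I * z * wdz (poissonInt F) z
          = (1 / (2 * (π : ℂ) * Complex.I)) *
              ∫ t in (0:ℝ)..(2 * π),
                (Fd t / (Complex.exp ((t : ℂ) * Complex.I) - z)) *
                  (Complex.I * Complex.exp ((t : ℂ) * Complex.I))) ∧
      (Complex.I * z * wdz (poissonInt F) z
          = (1 / (2 * (π : ℂ))) *
              ∫ t in (0:ℝ)..(2 * π),
                Fd t / (1 - z * Complex.exp (-(t : ℂ) * Complex.I))) := by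
  intro z hz
  have hcauchy := hF.I_mul_wdz_poissonInt hz
  exact ⟨hcauchy.trans (cauchyIntegral_eq_integral_div_one_sub Fd z).symm, hcauchy⟩

end
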